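/- (Proposition 1, full equivalence of the constrained and penalized problems under strict inequality.) Let d : ℕ, let S be a score function on binary adjacency matrices of size d, let S* be the minimum of S over acyclic binary adjacency matrices, and let hmin > 0 satisfy hmin ≤ h(A) for every non-acyclic binary adjacency matrix A. Assume S_L ≤ S(A) for every binary adjacency matrix A, S* ≤ S_U, λ1 ≥ 0, λ2 ≥ 0 and λ1 + λ2·hmin > S_U − S_L. Then for every binary adjacency matrix A: A is acyclic and S(A) = S* if and only if A minimizes the penalized objective F over all binary adjacency matrices. -/

import Mathlib

/-- A binary adjacency matrix: every entry is 0 or 1. -/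
def IsBinary {d : ℕ} (A : Matrix (Fin d) (Fin d) ℝ) : Prop :=
  ∀ i j, A i j = 0 ∨ A i j = 1

/-- The directed graph induced by `A` (edge `i → j` iff `A i j = 1`) is acyclic. -/
def IsAcyclicMat {d : ℕ} (A : Matrix (Fin d) (Fin d) ℝ) : Prop :=
  Irreflexive (Relation.TransGen (fun i j => A i j = 1))

/-- The smooth acyclicity function `h(A) = trace (exp A) - d`. -/
noncomputable def hAcyc {d : ℕ} (A : Matrix (Fin d) (Fin d) ℝ) : ℝ :=
  Matrix.trace (NormedSpace.exp A) - d

open Classical in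
/-- The penalized objective `F(A) = S(A) + λ₁·1[A ∉ DAGs] + λ₂·h(A)`. -/
noncomputable def penObj {d : ℕ} (S : Matrix (Fin d) (Fin d) ℝ → ℝ) (lam1 lam2 : ℝ)
    (A : Matrix (Fin d) (Fin d) ℝ) : ℝ :=
  S A + lam1 * (if IsAcyclicMat A then (0 : ℝ) else 1) + lam2 * hAcyc A

theorem pow_entry_transGen {d : ℕ} (A : Matrix (Fin d) (Fin d) ℝ) (hA : IsBinary A) (k : ℕ) :
    ∀ i j, (A ^ (k + 1)) i j ≠ 0 → Relation.TransGen (fun i j => A i j = 1) i j := by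
  induction k with
  | zero =>
    intro i j h
    rw [zero_add, pow_one] at h
    exact Relation.TransGen.single ((hA i j).resolve_left h)
  | succ k ih =>
    intro i j h
    rw [pow_succ, Matrix.mul_apply] at h
    obtain ⟨l, -, hl⟩ := Finset.exists_ne_zero_of_sum_ne_zero h
    exact (ih i l (left_ne_zero_of_mul hl)).tail ((hA l j).resolve_left (right_ne_zero_of_mul hl))

section
attribute [local instance] Matrix.linftyOpNormedRing Matrix.linftyOpNormedAlgebra

theorem matrix_exp_hasSum {d : ℕ} (A : Matrix (Fin d) (Fin d) ℝ) :
    HasSum (fun n : ℕ => ((n.factorial : ℝ)⁻¹) • A ^ n) (NormedSpace.exp A) :=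
  NormedSpace.exp_series_hasSum_exp' (𝕂 := ℝ) A
end

theorem hAcyc_eq_zero {d : ℕ} (A : Matrix (Fin d) (Fin d) ℝ) (hA : IsBinary A)
    (hac : IsAcyclicMat A) : hAcyc A = 0 := by
  have h1 := (matrix_exp_hasSum A).map (Matrix.traceAddMonoidHom (Fin d) ℝ)
    (continuous_id.matrix_trace)
  have h2 : HasSum (fun n : ℕ => Matrix.trace (((n.factorial : ℝ)⁻¹) • A ^ n)) (d : ℝ) := by
    have := hasSum_single (f := fun n : ℕ => Matrix.trace (((n.factorial : ℝ)⁻¹) • A ^ n)) 0 (by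
      intro n hn
      obtain ⟨k, rfl⟩ := Nat.exists_eq_succ_of_ne_zero hn
      have : Matrix.trace (A ^ (k + 1)) = 0 := by
        refine Finset.sum_eq_zero fun i _ => ?_
        by_contra h
        exact hac i (pow_entry_transGen A hA k i i h)
      simp [Matrix.trace_smul, this])
    simpa using this
  have h3 : Matrix.trace (NormedSpace.exp A) = (d : ℝ) := h1.unique h2
  simp [hAcyc, h3]

theorem prop1_equiv (d : ℕ) (S : Matrix (Fin d) (Fin d) ℝ → ℝ)
    (Sstar SL SU hmin lam1 lam2 : ℝ)
    (hSstar : IsLeast {s : ℝ | ∃ A : Matrix (Fin d) (Fin d) ℝ,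
        IsBinary A ∧ IsAcyclicMat A ∧ S A = s} Sstar)
    (hminpos : 0 < hmin)
    (hminle : ∀ A : Matrix (Fin d) (Fin d) ℝ, IsBinary A → ¬ IsAcyclicMat A → hmin ≤ hAcyc A)
    (hSL : ∀ A : Matrix (Fin d) (Fin d) ℝ, IsBinary A → SL ≤ S A)
    (hSU : Sstar ≤ SU)
    (hl1 : 0 ≤ lam1) (hl2 : 0 ≤ lam2)
    (hpen : SU - SL < lam1 + lam2 * hmin) :
    ∀ A : Matrix (Fin d) (Fin d) ℝ, IsBinary A →
      ((IsAcyclicMat A ∧ S A = Sstar) ↔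
        (∀ A' : Matrix (Fin d) (Fin d) ℝ, IsBinary A' →
          penObj S lam1 lam2 A ≤ penObj S lam1 lam2 A')) := by
  have pa : ∀ A : Matrix (Fin d) (Fin d) ℝ, IsBinary A → IsAcyclicMat A →
      penObj S lam1 lam2 A = S A := by
    intro A hA hac
    simp [penObj, hac, hAcyc_eq_zero A hA hac]
  have pn : ∀ A : Matrix (Fin d) (Fin d) ℝ, IsBinary A → ¬ IsAcyclicMat A →
      Sstar < penObj S lam1 lam2 A := by
    intro A hA hac
    have h1 := mul_le_mul_of_nonneg_left (hminle A hA hac) hl2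
    have h2 := hSL A hA
    simp only [penObj, hac, if_false]
    linarith
  obtain ⟨⟨B, hB, hBac, hBS⟩, hlow⟩ := hSstar
  intro A hA
  constructor
  · rintro ⟨hac, hS⟩ A' hA'
    rw [pa A hA hac, hS]
    by_cases h : IsAcyclicMat A'
    · rw [pa A' hA' h]
      exact hlow ⟨A', hA', h, rfl⟩
    · exact (pn A' hA' h).le
  · intro hmin'
    have hb := hmin' B hB
    rw [pa B hB hBac, hBS] at hb
    have hac : IsAcyclicMat A := by
      by_contra h
      exact absurd (pn A hA h) (not_lt.mpr hb)
    rw [pa A hA hac] at hb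
    exact ⟨hac, le_antisymm hb (hlow ⟨A, hA, hac, rfl⟩)⟩
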